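/- If T is a transitive tournament of order n, then dac(T) = ψ(T) = ⌈n/2⌉. -/

import Mathlib

/-- The subset `S` of vertices induces an acyclic subdigraph of the digraph with
arc relation `A` (i.e. there is no directed cycle all of whose vertices lie in `S`). -/
def AcyclicSet {V : Type*} (A : V → V → Prop) (S : Set V) : Prop :=
  ∀ v : V, ¬ Relation.TransGen (fun x y => x ∈ S ∧ y ∈ S ∧ A x y) v v

/-- `c` is an acyclic vertex coloring of the digraph `A` with `k` colors:
`c` is surjective and every chromatic class induces an acyclic subdigraph. -/
def IsAcyclicColoring {V : Type*} (A : V → V → Prop) {k : ℕ} (c : V → Fin k) : Prop :=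
  Function.Surjective c ∧ ∀ i : Fin k, AcyclicSet A {v | c v = i}

/-- `c` is a complete vertex coloring of the digraph `A` with `k` colors:
`c` is surjective and for every ordered pair of distinct colors `(i, j)` there is
an arc `(u, v)` with `c u = i` and `c v = j`. -/
def IsCompleteColoring {V : Type*} (A : V → V → Prop) {k : ℕ} (c : V → Fin k) : Prop :=
  Function.Surjective c ∧
    ∀ i j : Fin k, i ≠ j → ∃ u v : V, A u v ∧ c u = i ∧ c v = j

/-- The diachromatic number: the largest `k` admitting a complete acyclic `k`-coloring. -/
noncomputable def dac {V : Type*} (A : V → V → Prop) : ℕ :=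
  sSup {k | ∃ c : V → Fin k, IsAcyclicColoring A c ∧ IsCompleteColoring A c}

/-- The dichromatic number: the smallest `k` admitting an acyclic `k`-coloring. -/
noncomputable def dc {V : Type*} (A : V → V → Prop) : ℕ :=
  sInf {k | ∃ c : V → Fin k, IsAcyclicColoring A c}

/-- The pseudoachromatic number: the largest `k` admitting a complete `k`-coloring. -/
noncomputable def psi {V : Type*} (A : V → V → Prop) : ℕ :=
  sSup {k | ∃ c : V → Fin k, IsCompleteColoring A c}

/-- `A` is a tournament: no loops, and for distinct vertices exactly one of the
two possible arcs is present. -/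
def IsTournament {V : Type*} (A : V → V → Prop) : Prop :=
  (∀ v : V, ¬ A v v) ∧ ∀ u v : V, u ≠ v → (A u v ↔ ¬ A v u)

/-!
Two one-vertex color classes would be joined by arcs in both directions, so in a complete coloring
all classes but one have at least two vertices, which bounds the number of colors by `⌈n/2⌉`.
Conversely, order the vertices along the tournament and fold the order in the middle, giving the
`i`-th vertex from the bottom and the `i`-th from the top the color `i`: the bottom vertex of class
`i` precedes the bottom vertex of each class `j > i` and the top vertex of every other class.
-/

lemma two_mul_card_le_card_add_one {α β : Type*} [Fintype α] [Fintype β] {f : α → β}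
    (hf : Function.Surjective f) (h : {b | (f ⁻¹' {b}).Subsingleton}.Subsingleton) :
    2 * Fintype.card β ≤ Fintype.card α + 1 := by
  classical
  let fiber (b : β) : Finset α := {a | f a = b}
  have coe_fiber (b : β) : (fiber b : Set α) = f ⁻¹' {b} := by ext; simp [fiber]
  have fiber_nonempty (b : β) : (fiber b).Nonempty :=
    (hf b).imp fun a ha => Finset.mem_filter.2 ⟨Finset.mem_univ a, ha⟩
  have two_le (b : β) : 2 ≤ (fiber b).card + if (f ⁻¹' {b}).Subsingleton then 1 else 0 := by
    split_ifs with hb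
    · exact Nat.add_le_add_right (fiber_nonempty b).card_pos 1
    · rw [← coe_fiber, Set.not_subsingleton_iff] at hb
      exact Finset.one_lt_card_iff_nontrivial.2 hb
  have card_small : (Finset.univ.filter fun b => (f ⁻¹' {b}).Subsingleton).card ≤ 1 :=
    Finset.card_le_one_iff_subsingleton.2 (by simpa using h)
  calc 2 * Fintype.card β = ∑ _b : β, 2 := by simp [mul_comm]
    _ ≤ ∑ b, ((fiber b).card + if (f ⁻¹' {b}).Subsingleton then 1 else 0) :=
      Finset.sum_le_sum fun b _ => two_le b
    _ = Fintype.card α + (Finset.univ.filter fun b => (f ⁻¹' {b}).Subsingleton).card := by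
      rw [Finset.sum_add_distrib, ← Finset.card_filter, ← Finset.card_univ (α := α),
        Finset.card_eq_sum_card_fiberwise fun a _ => Finset.mem_coe.2 (Finset.mem_univ (f a))]
    _ ≤ Fintype.card α + 1 := Nat.add_le_add_left card_small _

section

variable {V W : Type*} {A : V → V → Prop} {B : W → W → Prop} {k : ℕ}

lemma IsTournament.asymm (hT : IsTournament A) : Std.Asymm A where
  asymm u v huv := by
    obtain rfl | hne := eq_or_ne u v
    · exact hT.1 u
    · exact (hT.2 u v hne).1 huv

lemma IsTournament.trichotomous (hT : IsTournament A) : Std.Trichotomous A where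
  trichotomous u v huv hvu := by
    by_contra hne
    exact huv ((hT.2 u v hne).2 hvu)

lemma isStrictTotalOrder_of_acyclic [Std.Trichotomous A]
    (hA : ∀ v, ¬ Relation.TransGen A v v) : IsStrictTotalOrder V A where
  irrefl v hv := hA v (.single hv)
  trans u v w huv hvw := by
    have huw : Relation.TransGen A u w := .tail (.single huv) hvw
    rcases trichotomous_of A u w with h | rfl | h
    · exact h
    · exact absurd huw (hA u)
    · exact absurd (huw.tail h) (hA u)

lemma nonempty_relIso_fin_lt [Fintype V] (A : V → V → Prop) [IsStrictTotalOrder V A] :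
    Nonempty (A ≃r ((· < ·) : Fin (Fintype.card V) → Fin (Fintype.card V) → Prop)) := by
  classical
  let := linearOrderOfSTO A
  exact ⟨(monoEquivOfFin V rfl).symm.toRelIsoLT⟩

lemma isAcyclicColoring_of_acyclic (hA : ∀ v, ¬ Relation.TransGen A v v) {c : V → Fin k}
    (hc : Function.Surjective c) : IsAcyclicColoring A c :=
  ⟨hc, fun _ v hv => hA v (Relation.TransGen.mono (fun _ _ h => h.2.2) v v hv)⟩

lemma IsCompleteColoring.comp_relIso {c : W → Fin k} (hc : IsCompleteColoring B c) (e : A ≃r B) :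
    IsCompleteColoring A (c ∘ e) := by
  refine ⟨hc.1.comp e.surjective, fun i j hij => ?_⟩
  obtain ⟨u, v, huv, hu, hv⟩ := hc.2 i j hij
  exact ⟨e.symm u, e.symm v, e.symm.map_rel_iff.2 huv, by simpa using hu, by simpa using hv⟩

lemma IsCompleteColoring.eq_of_subsingleton_fibers [Std.Asymm A] {c : V → Fin k}
    (hc : IsCompleteColoring A c) {i j : Fin k} (hi : (c ⁻¹' {i}).Subsingleton)
    (hj : (c ⁻¹' {j}).Subsingleton) : i = j := by
  by_contra hij
  obtain ⟨u, v, huv, hu, hv⟩ := hc.2 i j hij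
  obtain ⟨v', u', hvu', hv', hu'⟩ := hc.2 j i (Ne.symm hij)
  obtain rfl : u = u' := hi hu hu'
  obtain rfl : v = v' := hj hv hv'
  exact Std.Asymm.asymm u v huv hvu'

lemma IsCompleteColoring.le_half_card [Fintype V] [Std.Asymm A] {c : V → Fin k}
    (hc : IsCompleteColoring A c) : k ≤ (Fintype.card V + 1) / 2 := by
  have two_mul_le : 2 * Fintype.card (Fin k) ≤ Fintype.card V + 1 :=
    two_mul_card_le_card_add_one hc.1 fun _ hi _ hj => hc.eq_of_subsingleton_fibers hi hj
  rw [Fintype.card_fin] at two_mul_le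
  omega

end

/-- The coloring of the linear order `Fin n` that folds it in the middle: a vertex is colored by its
distance to the nearer end, so the classes are the pairs `{i, n - 1 - i}` (a single vertex in the
middle if `n` is odd). It attains the bound `⌈n/2⌉` on the number of colors. -/
def foldColoring (n : ℕ) (x : Fin n) : Fin ((n + 1) / 2) :=
  ⟨min x x.rev, by grind⟩

section

variable {n : ℕ}

lemma foldColoring_castLE (h : (n + 1) / 2 ≤ n) (i : Fin ((n + 1) / 2)) :
    foldColoring n (i.castLE h) = i := by
  ext
  simp only [foldColoring, Fin.val_rev, Fin.val_castLE]
  omega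

lemma foldColoring_rev (x : Fin n) : foldColoring n x.rev = foldColoring n x := by
  simp [foldColoring, min_comm]

lemma isCompleteColoring_foldColoring (n : ℕ) :
    IsCompleteColoring ((· < ·) : Fin n → Fin n → Prop) (foldColoring n) := by
  have half_le : (n + 1) / 2 ≤ n := by omega
  let bot (i : Fin ((n + 1) / 2)) : Fin n := i.castLE half_le
  have color_bot (i) : foldColoring n (bot i) = i := foldColoring_castLE half_le i
  refine ⟨fun i => ⟨bot i, color_bot i⟩, fun i j hij => ?_⟩
  rcases hij.lt_or_gt with hlt | hgt
  · exact ⟨bot i, bot j, hlt, color_bot i, color_bot j⟩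
  · have bot_lt_top : bot i < (bot j).rev := by
      simp only [bot, Fin.lt_def, Fin.val_rev, Fin.val_castLE] at hgt ⊢
      omega
    exact ⟨bot i, (bot j).rev, bot_lt_top, color_bot i, (foldColoring_rev _).trans (color_bot j)⟩

end

/-- If `T` is a transitive tournament of order `n`, then `dac(T) = ψ(T) = ⌈n/2⌉`. -/
theorem stmt10 {V : Type*} [Fintype V] (A : V → V → Prop)
    (hT : IsTournament A)
    (htrans : ∀ v : V, ¬ Relation.TransGen A v v) :
    dac A = (Fintype.card V + 1) / 2 ∧ psi A = (Fintype.card V + 1) / 2 := by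
  have := hT.asymm
  have := hT.trichotomous
  have := isStrictTotalOrder_of_acyclic htrans
  obtain ⟨e⟩ := nonempty_relIso_fin_lt A
  have complete : IsCompleteColoring A (foldColoring (Fintype.card V) ∘ e) :=
    (isCompleteColoring_foldColoring _).comp_relIso e
  have acyclic := isAcyclicColoring_of_acyclic htrans complete.1
  exact ⟨IsGreatest.csSup_eq ⟨⟨_, acyclic, complete⟩, fun _ ⟨_, _, hc⟩ => hc.le_half_card⟩,
    IsGreatest.csSup_eq ⟨⟨_, complete⟩, fun _ ⟨_, hc⟩ => hc.le_half_card⟩⟩
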